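/- Let γ, β, h > 0, q, p ∈ ℝ, and let U : ℝ → ℝ be continuously differentiable. Set Γ = √((2γ/β)(1 − e^{−γh})) and define T : ℝ² → ℝ², T(z₁,z₂) = (Q(z₁), P(z₁,z₂)), by 𝒫₂(z₁) = e^{−γh/2} p + Γ z₁ − (h/2) U'(q), 𝒬(z₁) = q + h 𝒫₂(z₁), Q(z₁) = |𝒬(z₁)|, 𝒫₄(z₁) = sign(𝒬(z₁)) 𝒫₂(z₁) − (h/2) U'(Q(z₁)), and P(z₁,z₂) = e^{−γh/2} 𝒫₄(z₁) + Γ z₂. If (ξ₁, ξ₂) is a pair of independent standard Gaussian random variables, then the law of T(ξ₁, ξ₂) is absolutely continuous with respect to Lebesgue measure on ℝ². -/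

import Mathlib

open MeasureTheory

/-!
Call a measurable map nonsingular (`QuasiMeasurePreserving`) if preimages of null sets are null; it
then sends absolutely continuous laws to absolutely continuous laws. The step `T` is a skew product:
the new position depends on `z₁` only, as the absolute value of a nonconstant affine function, and
for fixed `z₁` the new momentum is a nonconstant affine function of `z₂`. Both are nonsingular on
`ℝ`, hence so is `T` on `ℝ²` by Fubini.
-/

section Nonsingular

open Measure

variable {α β γ δ : Type*} [MeasurableSpace α] [MeasurableSpace β] [MeasurableSpace γ]
  [MeasurableSpace δ]

theorem quasiMeasurePreserving_skewProduct {μ : Measure α} {ν : Measure β} {μ' : Measure γ}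
    {ν' : Measure δ} [SFinite ν] [SFinite ν'] {f : α → γ} {g : α → β → δ}
    (hf : QuasiMeasurePreserving f μ μ') (hg : Measurable (Function.uncurry g))
    (hgν : ∀ᵐ x ∂μ, QuasiMeasurePreserving (g x) ν ν') :
    QuasiMeasurePreserving (fun z : α × β ↦ (f z.1, g z.1 z.2)) (μ.prod ν) (μ'.prod ν') := by
  have hm : Measurable fun z : α × β ↦ (f z.1, g z.1 z.2) :=
    (hf.measurable.comp measurable_fst).prodMk hg
  refine ⟨hm, AbsolutelyContinuous.mk fun S hS hS₀ ↦ ?_⟩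
  rw [map_apply hm hS]
  have section_null : ∀ᵐ x ∂μ, ν' (Prod.mk (f x) ⁻¹' S) = 0 :=
    hf.ae (measure_ae_null_of_prod_null hS₀)
  refine measure_prod_null_of_ae_null (hm hS) ?_
  filter_upwards [section_null, hgν] with x hx hgx
  exact hgx.preimage_null hx

theorem quasiMeasurePreserving_of_forall_eq_or_eq {μ : Measure α} {ν : Measure β} {f u v : α → β}
    (hf : Measurable f) (hu : QuasiMeasurePreserving u μ ν) (hv : QuasiMeasurePreserving v μ ν)
    (hfuv : ∀ x, f x = u x ∨ f x = v x) : QuasiMeasurePreserving f μ ν := by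
  refine ⟨hf, AbsolutelyContinuous.mk fun S hS hS₀ ↦ ?_⟩
  rw [map_apply hf hS]
  refine measure_mono_null (fun x (hx : f x ∈ S) ↦ ?_)
    (measure_union_null (hu.preimage_null hS₀) (hv.preimage_null hS₀))
  rcases hfuv x with hxu | hxv
  · exact .inl (by rwa [Set.mem_preimage, ← hxu])
  · exact .inr (by rwa [Set.mem_preimage, ← hxv])

theorem quasiMeasurePreserving_abs {G : Type*} [AddCommGroup G] [LinearOrder G]
    [MeasurableSpace G] [MeasurableNeg G] [MeasurableSup₂ G] (μ : Measure G) [μ.IsNegInvariant] :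
    QuasiMeasurePreserving (fun x : G ↦ |x|) μ μ :=
  quasiMeasurePreserving_of_forall_eq_or_eq (measurable_id.sup measurable_neg)
    (QuasiMeasurePreserving.id μ) (measurePreserving_neg μ).quasiMeasurePreserving abs_choice

theorem quasiMeasurePreserving_const_add_smul {E : Type*} [NormedAddCommGroup E]
    [NormedSpace ℝ E] [MeasurableSpace E] [BorelSpace E] [FiniteDimensional ℝ E]
    (μ : Measure E) [μ.IsAddHaarMeasure] (v : E) {r : ℝ} (hr : r ≠ 0) :
    QuasiMeasurePreserving (fun x ↦ v + r • x) μ μ :=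
  (measurePreserving_add_left μ v).quasiMeasurePreserving.comp (quasiMeasurePreserving_smul μ hr)

theorem absolutelyContinuous_map_prodMk_of_indepFun {μ : Measure α} [IsFiniteMeasure μ]
    {ν : Measure β} {τ : Measure γ} [SFinite τ] {X : α → β} {Y : α → γ}
    (hX : AEMeasurable X μ) (hY : AEMeasurable Y μ) (hXν : μ.map X ≪ ν) (hYτ : μ.map Y ≪ τ)
    (hXY : ProbabilityTheory.IndepFun X Y μ) :
    μ.map (fun x ↦ (X x, Y x)) ≪ ν.prod τ := by
  rw [hXY.map_prod_eq_prod_map_map hX hY]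
  exact hXν.prod hYτ

end Nonsingular

theorem absolutelyContinuous_map_prodMk_of_hasLaw_gaussianReal {Ω : Type*} [MeasurableSpace Ω]
    {μ : Measure Ω} [IsFiniteMeasure μ] {X Y : Ω → ℝ} {m n : ℝ} {v w : NNReal} (hv : v ≠ 0)
    (hw : w ≠ 0) (hX : ProbabilityTheory.HasLaw X (ProbabilityTheory.gaussianReal m v) μ)
    (hY : ProbabilityTheory.HasLaw Y (ProbabilityTheory.gaussianReal n w) μ)
    (hXY : ProbabilityTheory.IndepFun X Y μ) :
    μ.map (fun ω ↦ (X ω, Y ω)) ≪ volume :=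
  absolutelyContinuous_map_prodMk_of_indepFun hX.aemeasurable hY.aemeasurable
    (hX.map_eq ▸ ProbabilityTheory.gaussianReal_absolutelyContinuous m hv)
    (hY.map_eq ▸ ProbabilityTheory.gaussianReal_absolutelyContinuous n hw) hXY

theorem measurable_realSign : Measurable Real.sign :=
  Measurable.ite measurableSet_Iio measurable_const
    (Measurable.ite measurableSet_Ioi measurable_const measurable_const)

theorem ornsteinUhlenbeck_stdDev_pos {γ β h : ℝ} (hγ : 0 < γ) (hβ : 0 < β) (hh : 0 < h) :
    0 < √((2 * γ / β) * (1 - Real.exp (-γ * h))) := by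
  have hexp : Real.exp (-γ * h) < 1 :=
    Real.exp_lt_one_iff.2 (mul_neg_of_neg_of_pos (neg_neg_of_pos hγ) hh)
  exact Real.sqrt_pos.2 (mul_pos (by positivity) (sub_pos.2 hexp))

namespace OBAcBO

open Measure

variable (V' : ℝ → ℝ) (a h Γ q p : ℝ)

/-- The momentum `𝒫₂(z₁)` after the first Ornstein–Uhlenbeck half-step and the first kick, from
position `q` and momentum `p`. Here `V'` plays the role of `U'`, and `a` and `Γ` are the damping
factor and the noise amplitude of an Ornstein–Uhlenbeck half-step. -/
noncomputable def kickedMomentum (z₁ : ℝ) : ℝ :=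
  a * p + Γ * z₁ - (h / 2) * V' q

/-- The position `𝒬(z₁)` after the free drift, before reflection into the half-line. -/
noncomputable def driftedPosition (z₁ : ℝ) : ℝ :=
  q + h * kickedMomentum V' a h Γ q p z₁

/-- The momentum `𝒫₄(z₁)` after the collision with the boundary and the second kick. -/
noncomputable def collidedMomentum (z₁ : ℝ) : ℝ :=
  Real.sign (driftedPosition V' a h Γ q p z₁) * kickedMomentum V' a h Γ q p z₁ -
    (h / 2) * V' |driftedPosition V' a h Γ q p z₁|

/-- The map `T` of one `[OBA_cBO]` step on the half-line, as a function of the two noise inputs. -/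
noncomputable def step (z : ℝ × ℝ) : ℝ × ℝ :=
  (|driftedPosition V' a h Γ q p z.1|, a * collidedMomentum V' a h Γ q p z.1 + Γ * z.2)

variable {V' h Γ}

theorem quasiMeasurePreserving_driftedPosition (hh : h ≠ 0) (hΓ : Γ ≠ 0) :
    QuasiMeasurePreserving (driftedPosition V' a h Γ q p) volume volume := by
  have affine : driftedPosition V' a h Γ q p =
      fun z₁ ↦ driftedPosition V' a h Γ q p 0 + (h * Γ) • z₁ := by
    funext z₁
    simp only [driftedPosition, kickedMomentum, smul_eq_mul]
    ring
  rw [affine]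
  exact quasiMeasurePreserving_const_add_smul volume _ (mul_ne_zero hh hΓ)

theorem measurable_collidedMomentum (hV' : Measurable V') :
    Measurable (collidedMomentum V' a h Γ q p) := by
  have hP₂ : Measurable (kickedMomentum V' a h Γ q p) := by
    unfold kickedMomentum
    fun_prop
  have hQ : Measurable (driftedPosition V' a h Γ q p) := (hP₂.const_mul h).const_add q
  exact ((measurable_realSign.comp hQ).mul hP₂).sub ((hV'.comp hQ.abs).const_mul _)

theorem quasiMeasurePreserving_step (hV' : Measurable V') (hh : h ≠ 0) (hΓ : Γ ≠ 0) :
    QuasiMeasurePreserving (step V' a h Γ q p) volume volume := by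
  have position : QuasiMeasurePreserving (fun z₁ ↦ |driftedPosition V' a h Γ q p z₁|)
      volume volume :=
    (quasiMeasurePreserving_abs volume).comp
      (quasiMeasurePreserving_driftedPosition a q p hh hΓ)
  have measurable_momentum : Measurable (Function.uncurry fun z₁ z₂ ↦
      a * collidedMomentum V' a h Γ q p z₁ + Γ * z₂) :=
    (((measurable_collidedMomentum a q p hV').comp measurable_fst).const_mul a).add
      (measurable_snd.const_mul Γ)
  exact quasiMeasurePreserving_skewProduct position measurable_momentum
    (.of_forall fun _ ↦ quasiMeasurePreserving_const_add_smul volume _ hΓ)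

end OBAcBO

theorem stmt18_general {V' : ℝ → ℝ} (hV' : Measurable V') (a q p : ℝ) {h Γ : ℝ} (hh : h ≠ 0)
    (hΓ : Γ ≠ 0) {Ω : Type*} [MeasurableSpace Ω] {μ : Measure Ω} {ξ : Ω → ℝ × ℝ}
    (hξ : Measurable ξ) (hlaw : μ.map ξ ≪ volume) :
    μ.map (fun ω ↦ OBAcBO.step V' a h Γ q p (ξ ω)) ≪ volume :=
  ((OBAcBO.quasiMeasurePreserving_step a q p hV' hh hΓ).comp ⟨hξ, hlaw⟩).absolutelyContinuous

/-- The law of one step `T(ξ₁,ξ₂)` of the splitting scheme `[OBA_cBO]` for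
one-dimensional confined Langevin dynamics on the half-line, driven by two independent
standard Gaussian random variables, is absolutely continuous with respect to Lebesgue
measure on `ℝ²`. -/
theorem stmt18 (γ β h q p : ℝ) (hγ : 0 < γ) (hβ : 0 < β) (hh : 0 < h)
    (U : ℝ → ℝ) (hU : ContDiff ℝ 1 U)
    (Γ : ℝ) (hΓ : Γ = Real.sqrt ((2 * γ / β) * (1 - Real.exp (-γ * h))))
    (P₂ Qc Qp P₄ : ℝ → ℝ) (T : ℝ × ℝ → ℝ × ℝ)
    (hP₂ : ∀ z₁, P₂ z₁ = Real.exp (-γ * h / 2) * p + Γ * z₁ - (h / 2) * deriv U q)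
    (hQc : ∀ z₁, Qc z₁ = q + h * P₂ z₁)
    (hQp : ∀ z₁, Qp z₁ = |Qc z₁|)
    (hP₄ : ∀ z₁, P₄ z₁ = Real.sign (Qc z₁) * P₂ z₁ - (h / 2) * deriv U (Qp z₁))
    (hT : ∀ z : ℝ × ℝ, T z = (Qp z.1, Real.exp (-γ * h / 2) * P₄ z.1 + Γ * z.2))
    {Ω : Type*} [MeasurableSpace Ω] (μ : Measure Ω) [IsProbabilityMeasure μ]
    (ξ₁ ξ₂ : Ω → ℝ) (hmeas₁ : Measurable ξ₁) (hmeas₂ : Measurable ξ₂)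
    (hgauss₁ : Measure.map ξ₁ μ = ProbabilityTheory.gaussianReal 0 1)
    (hgauss₂ : Measure.map ξ₂ μ = ProbabilityTheory.gaussianReal 0 1)
    (hindep : ProbabilityTheory.IndepFun ξ₁ ξ₂ μ) :
    Measure.map (fun ω => T (ξ₁ ω, ξ₂ ω)) μ ≪ (volume : Measure (ℝ × ℝ)) := by
  obtain rfl : T = OBAcBO.step (deriv U) (Real.exp (-γ * h / 2)) h Γ q p :=
    funext fun z ↦ by simp only [hT, hP₄, hQp, hQc, hP₂]; rfl
  exact stmt18_general (measurable_deriv U) _ q p hh.ne'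
    (hΓ ▸ (ornsteinUhlenbeck_stdDev_pos hγ hβ hh).ne') (hmeas₁.prodMk hmeas₂)
    (absolutelyContinuous_map_prodMk_of_hasLaw_gaussianReal one_ne_zero one_ne_zero
      ⟨hmeas₁.aemeasurable, hgauss₁⟩ ⟨hmeas₂.aemeasurable, hgauss₂⟩ hindep)
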